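/- Let m ≥ 1 and let x, a, p ∈ SH_m with x ≠ p and a ≠ iI_m. Write A = log(φ(a) φ(a)ᵀ) and, for q ∈ SH_m, M(q) = log(φ(p)^{-1} φ(q) φ(q)ᵀ φ(p)^{-ᵀ}). Let the hyperplane be H = { q ∈ SH_m : ⟨M(q), A⟩ = 0 }, and let C = sup { ⟨M(q), M(x)⟩ / (‖M(q)‖ ‖M(x)‖) : q ∈ H, q ≠ p }, the supremum of gyrocosines between ⊖p ⊕ q and ⊖p ⊕ x over q in the hyperplane. Then sqrt(1 − C²) · ‖M(x)‖ = |⟨M(x), A⟩| / ‖A‖; i.e., the distance from x to the hyperplane H_{a,p} equals |⟨log(φ(p)^{-1} φ(x) φ(x)ᵀ φ(p)^{-ᵀ}), log(φ(a) φ(a)ᵀ)⟩| / ‖log(φ(a) φ(a)ᵀ)‖. (Theorem 1.) -/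

import Mathlib

open Matrix

/-- Membership in the Siegel upper half space. -/
def inSH {m : ℕ} (x : Matrix (Fin m) (Fin m) ℂ) : Prop :=
  ∃ u v : Matrix (Fin m) (Fin m) ℝ, uᵀ = u ∧ v.PosDef ∧
    x = u.map ((↑) : ℝ → ℂ) + Complex.I • v.map ((↑) : ℝ → ℂ)

/-- Real part of a complex matrix. -/
def rePart {n : ℕ} (x : Matrix (Fin n) (Fin n) ℂ) : Matrix (Fin n) (Fin n) ℝ :=
  Matrix.of fun i j => (x i j).re

/-- Imaginary part of a complex matrix. -/
def imPart {n : ℕ} (x : Matrix (Fin n) (Fin n) ℂ) : Matrix (Fin n) (Fin n) ℝ :=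
  Matrix.of fun i j => (x i j).im

open scoped Classical in
/-- The unique symmetric positive definite square root (when it exists). -/
noncomputable def spdSqrt {n : ℕ} (v : Matrix (Fin n) (Fin n) ℝ) :
    Matrix (Fin n) (Fin n) ℝ :=
  if h : ∃ r : Matrix (Fin n) (Fin n) ℝ, r.PosDef ∧ r * r = v then h.choose else 0

open scoped Classical in
/-- The principal matrix logarithm: the unique symmetric matrix whose matrix
exponential is the given symmetric positive definite matrix. -/
noncomputable def spdLog {n : Type*} [Fintype n] [DecidableEq n]
    (P : Matrix n n ℝ) : Matrix n n ℝ :=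
  if h : ∃ L : Matrix n n ℝ, Lᵀ = L ∧ NormedSpace.exp L = P then h.choose else 0

/-- The representative φ(x) = [[v^{1/2}, u v^{-1/2}], [0, v^{-1/2}]] of
x = u + iv. -/
noncomputable def phiMap {n : ℕ} (x : Matrix (Fin n) (Fin n) ℂ) :
    Matrix (Fin n ⊕ Fin n) (Fin n ⊕ Fin n) ℝ :=
  Matrix.fromBlocks (spdSqrt (imPart x)) (rePart x * (spdSqrt (imPart x))⁻¹)
    0 (spdSqrt (imPart x))⁻¹

/-- The Frobenius inner product ⟨A,B⟩ = Tr(AᵀB). -/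
noncomputable def frobInner {n : Type*} [Fintype n] (A B : Matrix n n ℝ) : ℝ :=
  Matrix.trace (Aᵀ * B)

/-- The Frobenius norm. -/
noncomputable def frobNorm {n : Type*} [Fintype n] (A : Matrix n n ℝ) : ℝ :=
  Real.sqrt (Matrix.trace (Aᵀ * A))

/-- M(q) = log(φ(p)⁻¹ φ(q) φ(q)ᵀ φ(p)⁻ᵀ). -/
noncomputable def Mlog {m : ℕ} (p q : Matrix (Fin m) (Fin m) ℂ) :
    Matrix (Fin m ⊕ Fin m) (Fin m ⊕ Fin m) ℝ :=
  spdLog ((phiMap p)⁻¹ * phiMap q * (phiMap q)ᵀ * ((phiMap p)⁻¹)ᵀ)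

/-!
The map `q ↦ M(q)` is a bijection from the Siegel upper half space onto the tangent space `𝔭` of
symmetric matrices in the symplectic Lie algebra: `x` is recovered from the blocks of `φ(x) φ(x)ᵀ`,
every positive definite symplectic matrix has this form, congruence by `φ(p)⁻¹` permutes these
matrices, and the logarithm maps them bijectively onto `𝔭`. It sends `p` to `0` and the hyperplane
to the orthogonal complement of `A` in `𝔭`. The supremum is therefore that of the cosines of the
angles between `X = M(x)` and the nonzero vectors of `A^⊥`. By Cauchy–Schwarz it equals
`‖π X‖ / ‖X‖`, with `π` the orthogonal projection onto `A^⊥`, and by Pythagoras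
`√(1 - C²) ‖X‖` is the length of the projection of `X` onto the line through `A`.
-/

section InnerProductSpace

open scoped RealInnerProductSpace

variable {E : Type*} [NormedAddCommGroup E] [InnerProductSpace ℝ E]

lemma cos_angle_le_norm_starProjection_div (K : Submodule ℝ E) [K.HasOrthogonalProjection]
    (x : E) {y : E} (hy : y ∈ K) :
    Real.cos (InnerProductGeometry.angle y x) ≤ ‖K.starProjection x‖ / ‖x‖ := by
  have hproj : ⟪y, x⟫ = ⟪y, K.starProjection x⟫ := by
    rw [← K.inner_starProjection_left_eq_right, K.starProjection_eq_self_iff.2 hy]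
  rw [InnerProductGeometry.cos_angle, hproj, ← div_div]
  gcongr
  exact div_le_of_le_mul₀ (norm_nonneg _) (norm_nonneg _)
    ((real_inner_le_norm _ _).trans_eq (mul_comm _ _))

lemma cos_angle_starProjection_self (K : Submodule ℝ E) [K.HasOrthogonalProjection] {x : E}
    (hx : K.starProjection x ≠ 0) :
    Real.cos (InnerProductGeometry.angle (K.starProjection x) x) =
      ‖K.starProjection x‖ / ‖x‖ := by
  have hself : ⟪K.starProjection x, x⟫ = ‖K.starProjection x‖ ^ 2 := by
    rw [← real_inner_self_eq_norm_sq, ← K.inner_starProjection_left_eq_right,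
      K.starProjection_eq_self_iff.2 (K.starProjection_apply_mem x)]
  rw [InnerProductGeometry.cos_angle, hself, sq,
    mul_div_mul_left _ _ (norm_ne_zero_iff.2 hx)]

lemma sSup_cos_angle_image (K : Submodule ℝ E) [K.HasOrthogonalProjection] (x : E) :
    sSup ((fun y ↦ Real.cos (InnerProductGeometry.angle y x)) '' (↑K \ {0})) =
      ‖K.starProjection x‖ / ‖x‖ := by
  by_cases hx : K.starProjection x = 0
  · -- The image is `{0}`, or empty when `K = ⊥`; in both cases `sSup` returns `0`.
    have hzero : ∀ c ∈ (fun y ↦ Real.cos (InnerProductGeometry.angle y x)) '' (↑K \ {0}),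
        c = 0 := by
      rintro _ ⟨y, ⟨hy, -⟩, rfl⟩
      have : ⟪y, x⟫ = 0 := by
        rw [← K.starProjection_eq_self_iff.2 hy, K.inner_starProjection_left_eq_right, hx,
          inner_zero_right]
      simp only [InnerProductGeometry.cos_angle, this, zero_div]
    rw [hx, norm_zero, zero_div]
    exact le_antisymm (Real.sSup_nonpos fun c hc ↦ (hzero c hc).le)
      (Real.sSup_nonneg fun c hc ↦ (hzero c hc).ge)
  · refine IsGreatest.csSup_eq ⟨⟨_, ⟨K.starProjection_apply_mem x, hx⟩,
      cos_angle_starProjection_self K hx⟩, ?_⟩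
    rintro _ ⟨y, ⟨hy, -⟩, rfl⟩
    exact cos_angle_le_norm_starProjection_div K x hy

lemma sqrt_one_sub_norm_starProjection_orthogonal_div_sq_mul_norm (K : Submodule ℝ E)
    [K.HasOrthogonalProjection] (x : E) :
    √(1 - (‖Kᗮ.starProjection x‖ / ‖x‖) ^ 2) * ‖x‖ = ‖K.starProjection x‖ := by
  rcases eq_or_ne x 0 with rfl | hx
  · simp only [norm_zero, mul_zero, map_zero]
  have hx' : ‖x‖ ^ 2 ≠ 0 := by positivity
  calc √(1 - (‖Kᗮ.starProjection x‖ / ‖x‖) ^ 2) * ‖x‖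
      = √((‖x‖ ^ 2 - ‖Kᗮ.starProjection x‖ ^ 2) / ‖x‖ ^ 2) * ‖x‖ := by
        rw [div_pow, sub_div, div_self hx']
    _ = √(‖K.starProjection x‖ ^ 2 / ‖x‖ ^ 2) * ‖x‖ := by
        rw [K.norm_sq_eq_add_norm_sq_starProjection x, add_sub_cancel_right]
    _ = ‖K.starProjection x‖ := by
        rw [← div_pow, Real.sqrt_sq (by positivity), div_mul_cancel₀ _ (norm_ne_zero_iff.2 hx)]

lemma norm_starProjection_span_singleton (a x : E) :
    ‖(ℝ ∙ a).starProjection x‖ = |⟪x, a⟫| / ‖a‖ := by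
  rw [Submodule.starProjection_singleton, norm_smul, real_inner_comm, Real.norm_eq_abs, abs_div]
  rcases eq_or_ne a 0 with rfl | ha
  · simp only [norm_zero, mul_zero, div_zero]
  · have ha' : ‖a‖ ≠ 0 := norm_ne_zero_iff.2 ha
    rw [RCLike.ofReal_real_eq_id, id, abs_sq]
    field_simp

lemma sqrt_one_sub_sSup_cos_angle_sq_mul_norm (a x : E) :
    √(1 - sSup ((fun y ↦ Real.cos (InnerProductGeometry.angle y x)) '' (↑(ℝ ∙ a)ᗮ \ {0})) ^ 2) *
      ‖x‖ = |⟪x, a⟫| / ‖a‖ := by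
  rw [sSup_cos_angle_image, sqrt_one_sub_norm_starProjection_orthogonal_div_sq_mul_norm,
    norm_starProjection_span_singleton]

end InnerProductSpace

section Frobenius

variable {n : Type*} [Fintype n]

/-- The Frobenius norm, as the case of weight `1` of Mathlib's weighted trace norms. -/
noncomputable local instance frobNormedAddCommGroup [DecidableEq n] :
    NormedAddCommGroup (Matrix n n ℝ) :=
  toMatrixNormedAddCommGroup 1 PosDef.one

/-- The Frobenius inner product, as the case of weight `1` of Mathlib's weighted trace forms. -/
noncomputable local instance frobInnerProductSpace [DecidableEq n] :
    InnerProductSpace ℝ (Matrix n n ℝ) :=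
  toMatrixInnerProductSpace 1 PosSemidef.one

lemma frobInner_eq_inner [DecidableEq n] (A B : Matrix n n ℝ) :
    frobInner A B = inner ℝ A B := by
  change _ = (B * 1 * Aᴴ).trace
  rw [mul_one, conjTranspose_eq_transpose_of_trivial, trace_mul_comm, frobInner]

lemma frobNorm_eq_norm [DecidableEq n] (A : Matrix n n ℝ) : frobNorm A = ‖A‖ := by
  rw [norm_eq_sqrt_real_inner, ← frobInner_eq_inner, frobNorm, frobInner]

lemma sqrt_one_sub_sSup_frobInner_div_sq_mul_frobNorm {V : Submodule ℝ (Matrix n n ℝ)}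
    {X A : Matrix n n ℝ} (hX : X ∈ V) (hA : A ∈ V) :
    √(1 - sSup {c | ∃ Y ∈ V, frobInner Y A = 0 ∧ Y ≠ 0 ∧
      c = frobInner Y X / (frobNorm Y * frobNorm X)} ^ 2) * frobNorm X =
    |frobInner X A| / frobNorm A := by
  classical
  simp only [frobInner_eq_inner, frobNorm_eq_norm]
  have hcos : {c : ℝ | ∃ Y ∈ V, inner ℝ Y A = 0 ∧ Y ≠ 0 ∧ c = inner ℝ Y X / (‖Y‖ * ‖X‖)} =
      (fun Y : V ↦ Real.cos (InnerProductGeometry.angle Y ⟨X, hX⟩)) ''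
        (↑(ℝ ∙ (⟨A, hA⟩ : V))ᗮ \ {0}) := by
    ext c
    constructor
    · rintro ⟨Y, hY, hYA, hY0, rfl⟩
      exact ⟨⟨Y, hY⟩, ⟨Submodule.mem_orthogonal_singleton_iff_inner_left.2 hYA,
        fun h ↦ hY0 (congrArg Subtype.val h)⟩, InnerProductGeometry.cos_angle _ _⟩
    · rintro ⟨⟨Y, hY⟩, ⟨hYA, hY0⟩, rfl⟩
      have hYA' : inner ℝ (⟨Y, hY⟩ : V) ⟨A, hA⟩ = 0 :=
        Submodule.mem_orthogonal_singleton_iff_inner_left.1 hYA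
      exact ⟨Y, hY, hYA', fun h ↦ hY0 (Subtype.ext h), InnerProductGeometry.cos_angle _ _⟩
  rw [hcos]
  exact sqrt_one_sub_sSup_cos_angle_sq_mul_norm (⟨A, hA⟩ : V) ⟨X, hX⟩

end Frobenius

section ExpLog

variable {n : Type*} [Fintype n] [DecidableEq n]

open scoped Matrix.Norms.L2Operator MatrixOrder in
lemma bijOn_exp_isSymm_posDef :
    Set.BijOn NormedSpace.exp {L : Matrix n n ℝ | L.IsSymm} {P | P.PosDef} := by
  have hsa (L : Matrix n n ℝ) : IsSelfAdjoint L ↔ L.IsSymm := isHermitian_iff_isSymm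
  refine ⟨fun L hL ↦ ?_, fun L hL K hK h ↦ ?_, fun P hP ↦ ?_⟩
  · exact ((hsa L).2 hL).exp_nonneg.posSemidef.posDef_iff_isUnit.2 (isUnit_exp L)
  · rw [← CFC.log_exp L ((hsa L).2 hL), ← CFC.log_exp K ((hsa K).2 hK), h]
  · exact ⟨CFC.log P, (hsa _).1 .log, CFC.exp_log P hP.isStrictlyPositive⟩

lemma invOn_exp_spdLog :
    Set.InvOn NormedSpace.exp spdLog {P : Matrix n n ℝ | P.PosDef} {L | L.IsSymm} := by
  have hlog : Set.LeftInvOn spdLog NormedSpace.exp {L : Matrix n n ℝ | L.IsSymm} := by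
    intro L hL
    have h : ∃ K : Matrix n n ℝ, Kᵀ = K ∧ NormedSpace.exp K = NormedSpace.exp L := ⟨L, hL, rfl⟩
    rw [spdLog, dif_pos h]
    exact bijOn_exp_isSymm_posDef.injOn h.choose_spec.1 hL h.choose_spec.2
  refine ⟨?_, hlog⟩
  rw [← bijOn_exp_isSymm_posDef.image_eq]
  exact hlog.rightInvOn_image

lemma bijOn_spdLog_posDef_isSymm :
    Set.BijOn spdLog {P : Matrix n n ℝ | P.PosDef} {L | L.IsSymm} :=
  (Set.bijOn_comm invOn_exp_spdLog).1 bijOn_exp_isSymm_posDef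

lemma spdLog_one : spdLog (1 : Matrix n n ℝ) = 0 := by
  rw [← NormedSpace.exp_zero]
  exact invOn_exp_spdLog.2 isSymm_zero

end ExpLog

section Symplectic

variable {l R : Type*} [Fintype l] [DecidableEq l] [CommRing R]

lemma inv_mem_symplecticGroup {B : Matrix (l ⊕ l) (l ⊕ l) R} (hB : B ∈ symplecticGroup l R) :
    B⁻¹ ∈ symplecticGroup l R :=
  SymplecticGroup.coe_inv' ⟨B, hB⟩ ▸ Subtype.property _

lemma mem_symplecticGroup_iff_conj_J_eq_inv {P : Matrix (l ⊕ l) (l ⊕ l) R} (hP : P.IsSymm)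
    (hPu : IsUnit P.det) :
    P ∈ symplecticGroup l R ↔ J l R * P * (J l R)⁻¹ = P⁻¹ := by
  have hJ : IsUnit (J l R).det := isUnit_det_J l R
  rw [SymplecticGroup.mem_iff, hP.eq]
  constructor
  · intro h
    refine (inv_eq_right_inv ?_).symm
    rw [← mul_assoc, ← mul_assoc, h, mul_nonsing_inv _ hJ]
  · intro h
    rw [mul_assoc, ← nonsing_inv_mul_cancel_right _ (J l R * P) hJ, h,
      mul_nonsing_inv_cancel_left _ _ hPu]

lemma exp_mem_symplecticGroup_iff {L : Matrix (l ⊕ l) (l ⊕ l) ℝ} (hL : L.IsSymm) :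
    NormedSpace.exp L ∈ symplecticGroup l ℝ ↔ J l ℝ * L * J l ℝ = L := by
  have hJ : IsUnit (J l ℝ) := (isUnit_iff_isUnit_det _).2 (isUnit_det_J l ℝ)
  have hconj : (J l ℝ * L * (J l ℝ)⁻¹).IsSymm := by
    simp only [IsSymm, J_inv, transpose_mul, transpose_neg, J_transpose, hL.eq, mul_assoc,
      neg_mul, mul_neg, neg_neg]
  calc NormedSpace.exp L ∈ symplecticGroup l ℝ
      ↔ J l ℝ * NormedSpace.exp L * (J l ℝ)⁻¹ = (NormedSpace.exp L)⁻¹ :=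
        mem_symplecticGroup_iff_conj_J_eq_inv hL.exp ((isUnit_iff_isUnit_det _).1 (isUnit_exp L))
    _ ↔ NormedSpace.exp (J l ℝ * L * (J l ℝ)⁻¹) = NormedSpace.exp (-L) := by
        rw [exp_conj _ _ hJ, Matrix.exp_neg]
    _ ↔ J l ℝ * L * (J l ℝ)⁻¹ = -L :=
        bijOn_exp_isSymm_posDef.injOn.eq_iff hconj hL.neg
    _ ↔ J l ℝ * L * J l ℝ = L := by
        rw [J_inv, mul_neg, neg_inj]

/-- The symmetric positive definite symplectic matrices, that is, the symmetric space
`Sp(2m, ℝ) / U(m)` realised through `g ↦ g gᵀ`. -/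
def posDefSymplectic (l : Type*) [Fintype l] [DecidableEq l] : Set (Matrix (l ⊕ l) (l ⊕ l) ℝ) :=
  {P | P.PosDef ∧ P ∈ symplecticGroup l ℝ}

/-- The tangent space of `posDefSymplectic l` at the identity: the symmetric matrices of the
symplectic Lie algebra. For symmetric `L` the Lie algebra condition `L J + J L = 0` is written
`J L J = L`. -/
def symplecticTangent (l : Type*) [Fintype l] [DecidableEq l] :
    Submodule ℝ (Matrix (l ⊕ l) (l ⊕ l) ℝ) where
  carrier := {L | L.IsSymm ∧ J l ℝ * L * J l ℝ = L}
  zero_mem' := ⟨isSymm_zero, by rw [mul_zero, zero_mul]⟩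
  add_mem' := fun ⟨hL, hJL⟩ ⟨hK, hJK⟩ ↦ ⟨hL.add hK, by rw [mul_add, add_mul, hJL, hJK]⟩
  smul_mem' := fun t _ ⟨hL, hJL⟩ ↦ ⟨hL.smul t, by rw [mul_smul_comm, smul_mul_assoc, hJL]⟩

lemma bijOn_spdLog_posDefSymplectic :
    Set.BijOn spdLog (posDefSymplectic l) (symplecticTangent l) := by
  have hpre : posDefSymplectic l = {P | P.PosDef} ∩ spdLog ⁻¹' symplecticTangent l := by
    ext P
    refine and_congr_right fun hP ↦ ?_
    have hsymm : (spdLog P).IsSymm := bijOn_spdLog_posDef_isSymm.mapsTo hP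
    conv_lhs => rw [← invOn_exp_spdLog.1 hP, exp_mem_symplecticGroup_iff hsymm]
    exact (and_iff_right hsymm).symm
  rw [hpre]
  exact bijOn_spdLog_posDef_isSymm.subset_right fun L hL ↦ hL.1

lemma mul_mul_transpose_mem_posDefSymplectic {B P : Matrix (l ⊕ l) (l ⊕ l) ℝ}
    (hB : B ∈ symplecticGroup l ℝ) (hP : P ∈ posDefSymplectic l) :
    B * P * Bᵀ ∈ posDefSymplectic l := by
  have hBu : IsUnit B := (isUnit_iff_isUnit_det _).2 (SymplecticGroup.symplectic_det hB)
  refine ⟨?_, mul_mem (mul_mem hB hP.2) (SymplecticGroup.transpose_mem hB)⟩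
  rw [← conjTranspose_eq_transpose_of_trivial, ← star_eq_conjTranspose]
  exact (IsUnit.posDef_star_right_conjugate_iff hBu).2 hP.1

lemma bijOn_mul_mul_transpose_posDefSymplectic {B : Matrix (l ⊕ l) (l ⊕ l) ℝ}
    (hB : B ∈ symplecticGroup l ℝ) :
    Set.BijOn (fun P ↦ B * P * Bᵀ) (posDefSymplectic l) (posDefSymplectic l) := by
  have hBu := SymplecticGroup.symplectic_det hB
  have hBtu : IsUnit Bᵀ.det := by rwa [det_transpose]
  refine Set.InvOn.bijOn (f' := fun P ↦ B⁻¹ * P * B⁻¹ᵀ) ⟨fun P _ ↦ ?_, fun P _ ↦ ?_⟩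
    (fun P ↦ mul_mul_transpose_mem_posDefSymplectic hB)
    (fun P ↦ mul_mul_transpose_mem_posDefSymplectic (inv_mem_symplecticGroup hB))
  · simp only [transpose_nonsing_inv, mul_assoc, mul_nonsing_inv _ hBtu, mul_one,
      nonsing_inv_mul_cancel_left _ _ hBu]
  · simp only [transpose_nonsing_inv, mul_assoc, nonsing_inv_mul _ hBtu, mul_one,
      mul_nonsing_inv_cancel_left _ _ hBu]

/-- The matrix `φ(x) φ(x)ᵀ` for `x = u + iv`. It is free of square roots, so that `u` and `v` can be
read off from it. -/
noncomputable def siegelGram (u v : Matrix l l R) : Matrix (l ⊕ l) (l ⊕ l) R :=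
  fromBlocks (v + u * v⁻¹ * u) (u * v⁻¹) (v⁻¹ * u) v⁻¹

lemma siegelGram_inj {u v u' v' : Matrix l l R} (hv : IsUnit v) (hv' : IsUnit v') :
    siegelGram u v = siegelGram u' v' ↔ u = u' ∧ v = v' := by
  refine ⟨fun h ↦ ?_, by rintro ⟨rfl, rfl⟩; rfl⟩
  rw [isUnit_iff_isUnit_det] at hv hv'
  obtain ⟨-, huv, -, hinv⟩ := fromBlocks_inj.1 h
  obtain rfl : v = v' := by
    rw [← nonsing_inv_nonsing_inv v hv, hinv, nonsing_inv_nonsing_inv v' hv']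
  refine ⟨?_, rfl⟩
  rw [← nonsing_inv_mul_cancel_right _ u hv, huv, nonsing_inv_mul_cancel_right _ u' hv]

lemma exists_siegelGram_eq {P : Matrix (l ⊕ l) (l ⊕ l) ℝ} (hP : P ∈ posDefSymplectic l) :
    ∃ u v : Matrix l l ℝ, u.IsSymm ∧ v.PosDef ∧ siegelGram u v = P := by
  obtain ⟨hpos, hsp⟩ := hP
  obtain ⟨E, F, G, D, rfl⟩ : ∃ E F G D, P = fromBlocks E F G D :=
    ⟨_, _, _, _, (fromBlocks_toBlocks P).symm⟩
  have hD : D.PosDef := hpos.submatrix (e := Sum.inr) Sum.inr_injective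
  have hdet : IsUnit D.det := (isUnit_iff_isUnit_det _).1 hD.isUnit
  obtain ⟨hE, rfl, -, hDs⟩ := isSymm_fromBlocks_iff.1 (isHermitian_iff_isSymm.1 hpos.isHermitian)
  obtain ⟨-, hFD, hED⟩ := SymplecticGroup.fromBlocks_mem_iff.1 hsp
  rw [hDs.eq] at hFD
  rw [hE.eq, transpose_transpose] at hED
  have hu : D⁻¹ * Fᵀ = F * D⁻¹ := by
    rw [← mul_nonsing_inv_cancel_right _ Fᵀ hdet, hFD, mul_assoc,
      nonsing_inv_mul_cancel_left _ _ hdet]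
  refine ⟨F * D⁻¹, D⁻¹, ?_, hD.inv, ?_⟩
  · rw [IsSymm, transpose_mul, transpose_nonsing_inv, hDs.eq, hu]
  · rw [siegelGram, nonsing_inv_nonsing_inv _ hdet, nonsing_inv_mul_cancel_right _ _ hdet, ← hu,
      mul_nonsing_inv_cancel_left _ _ hdet, hu]
    congr 1
    calc D⁻¹ + F * (F * D⁻¹) = (1 + F * F) * D⁻¹ := by rw [add_mul, one_mul, mul_assoc]
      _ = E * D * D⁻¹ := by rw [← hED, sub_add_cancel]
      _ = E := mul_nonsing_inv_cancel_right _ _ hdet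

end Symplectic

section Siegel

variable {m : ℕ} {x y p : Matrix (Fin m) (Fin m) ℂ}

open scoped Matrix.Norms.L2Operator MatrixOrder in
lemma posDef_spdSqrt_and_mul_self {v : Matrix (Fin m) (Fin m) ℝ} (hv : v.PosDef) :
    (spdSqrt v).PosDef ∧ spdSqrt v * spdSqrt v = v := by
  have h : ∃ r : Matrix (Fin m) (Fin m) ℝ, r.PosDef ∧ r * r = v :=
    ⟨CFC.sqrt v, hv.isStrictlyPositive.sqrt.posDef, CFC.sqrt_mul_sqrt_self v hv.posSemidef.nonneg⟩
  rw [spdSqrt, dif_pos h]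
  exact h.choose_spec

lemma isSymm_spdSqrt {v : Matrix (Fin m) (Fin m) ℝ} (hv : v.PosDef) : (spdSqrt v).IsSymm :=
  isHermitian_iff_isSymm.1 (posDef_spdSqrt_and_mul_self hv).1.isHermitian

lemma rePart_map_add_I_smul (u v : Matrix (Fin m) (Fin m) ℝ) :
    rePart (u.map ((↑) : ℝ → ℂ) + Complex.I • v.map ((↑) : ℝ → ℂ)) = u := by
  ext i j; simp [rePart]

lemma imPart_map_add_I_smul (u v : Matrix (Fin m) (Fin m) ℝ) :
    imPart (u.map ((↑) : ℝ → ℂ) + Complex.I • v.map ((↑) : ℝ → ℂ)) = v := by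
  ext i j; simp [imPart]

lemma eq_iff_rePart_eq_and_imPart_eq : x = y ↔ rePart x = rePart y ∧ imPart x = imPart y := by
  simp only [← Matrix.ext_iff, rePart, imPart, of_apply, Complex.ext_iff, forall_and]

lemma inSH.isSymm_rePart (hx : inSH x) : (rePart x).IsSymm := by
  obtain ⟨u, v, hu, -, rfl⟩ := hx
  rwa [rePart_map_add_I_smul]

lemma inSH.posDef_imPart (hx : inSH x) : (imPart x).PosDef := by
  obtain ⟨u, v, -, hv, rfl⟩ := hx
  rwa [imPart_map_add_I_smul]

lemma phiMap_mem_symplecticGroup (hx : inSH x) : phiMap x ∈ symplecticGroup (Fin m) ℝ := by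
  have hrs := (isSymm_spdSqrt hx.posDef_imPart).eq
  have hdet : IsUnit (spdSqrt (imPart x)).det :=
    (isUnit_iff_isUnit_det _).1 (posDef_spdSqrt_and_mul_self hx.posDef_imPart).1.isUnit
  rw [phiMap, SymplecticGroup.fromBlocks_mem_iff]
  refine ⟨?_, ?_, ?_⟩
  · rw [mul_zero, transpose_zero, zero_mul]
  · rw [transpose_mul, transpose_nonsing_inv, hrs, hx.isSymm_rePart.eq, mul_assoc]
  · rw [hrs, transpose_zero, zero_mul, sub_zero, mul_nonsing_inv _ hdet]

lemma phiMap_mul_transpose (hx : inSH x) :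
    phiMap x * (phiMap x)ᵀ = siegelGram (rePart x) (imPart x) := by
  have hrr := (posDef_spdSqrt_and_mul_self hx.posDef_imPart).2
  have hrs := (isSymm_spdSqrt hx.posDef_imPart).eq
  have hinv : (imPart x)⁻¹ = (spdSqrt (imPart x))⁻¹ * (spdSqrt (imPart x))⁻¹ := by
    rw [← Matrix.mul_inv_rev, hrr]
  rw [phiMap, siegelGram, fromBlocks_transpose, fromBlocks_multiply]
  simp only [transpose_mul, transpose_nonsing_inv, transpose_zero, hrs, hx.isSymm_rePart.eq, hrr,
    hinv, mul_assoc, mul_zero, zero_mul, zero_add]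

lemma bijOn_phiMap_mul_transpose :
    Set.BijOn (fun x ↦ phiMap x * (phiMap x)ᵀ) {x | inSH x} (posDefSymplectic (Fin m)) := by
  refine ⟨fun x hx ↦ ?_, fun x hx y hy hxy ↦ ?_, fun P hP ↦ ?_⟩
  · have hone : (1 : Matrix (Fin m ⊕ Fin m) (Fin m ⊕ Fin m) ℝ) ∈ posDefSymplectic (Fin m) :=
      ⟨PosDef.one, one_mem _⟩
    simpa only [mul_one] using
      mul_mul_transpose_mem_posDefSymplectic (phiMap_mem_symplecticGroup hx) hone
  · change phiMap x * (phiMap x)ᵀ = phiMap y * (phiMap y)ᵀ at hxy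
    rw [phiMap_mul_transpose hx, phiMap_mul_transpose hy] at hxy
    exact eq_iff_rePart_eq_and_imPart_eq.2
      ((siegelGram_inj hx.posDef_imPart.isUnit hy.posDef_imPart.isUnit).1 hxy)
  · obtain ⟨u, v, hu, hv, rfl⟩ := exists_siegelGram_eq hP
    have hx : inSH (u.map ((↑) : ℝ → ℂ) + Complex.I • v.map ((↑) : ℝ → ℂ)) :=
      ⟨u, v, hu, hv, rfl⟩
    refine ⟨_, hx, ?_⟩
    change phiMap _ * (phiMap _)ᵀ = _
    rw [phiMap_mul_transpose hx, rePart_map_add_I_smul, imPart_map_add_I_smul]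

lemma bijOn_Mlog (hp : inSH p) :
    Set.BijOn (Mlog p) {q | inSH q} (symplecticTangent (Fin m)) := by
  have hpinv := inv_mem_symplecticGroup (phiMap_mem_symplecticGroup hp)
  refine ((bijOn_spdLog_posDefSymplectic.comp
    (bijOn_mul_mul_transpose_posDefSymplectic hpinv)).comp bijOn_phiMap_mul_transpose).congr ?_
  intro q _
  simp only [Function.comp_apply, Mlog, mul_assoc]

lemma Mlog_self (hp : inSH p) : Mlog p p = 0 := by
  have hdet := SymplecticGroup.symplectic_det (phiMap_mem_symplecticGroup hp)
  rw [Mlog, nonsing_inv_mul _ hdet, one_mul, ← transpose_mul, nonsing_inv_mul _ hdet,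
    transpose_one, spdLog_one]

lemma Mlog_eq_zero_iff (hp : inSH p) {q : Matrix (Fin m) (Fin m) ℂ} (hq : inSH q) :
    Mlog p q = 0 ↔ q = p := by
  rw [← Mlog_self hp]
  exact (bijOn_Mlog hp).injOn.eq_iff hq hp

end Siegel

/-- Theorem 1: the distance from x to the hyperplane H_{a,p},
computed via the supremum of gyrocosines, equals
|⟨log(φ(p)⁻¹ φ(x) φ(x)ᵀ φ(p)⁻ᵀ), log(φ(a) φ(a)ᵀ)⟩| / ‖log(φ(a) φ(a)ᵀ)‖. -/
theorem point_to_hyperplane_distance (m : ℕ) (hm : 1 ≤ m)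
    (x a p : Matrix (Fin m) (Fin m) ℂ)
    (hx : inSH x) (ha : inSH a) (hp : inSH p)
    (hxp : x ≠ p) (hai : a ≠ Complex.I • (1 : Matrix (Fin m) (Fin m) ℂ)) :
    Real.sqrt (1 -
        (sSup {c : ℝ | ∃ q : Matrix (Fin m) (Fin m) ℂ, inSH q ∧
          frobInner (Mlog p q) (spdLog (phiMap a * (phiMap a)ᵀ)) = 0 ∧ q ≠ p ∧
          c = frobInner (Mlog p q) (Mlog p x) /
              (frobNorm (Mlog p q) * frobNorm (Mlog p x))}) ^ 2) *
      frobNorm (Mlog p x)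
    = |frobInner (Mlog p x) (spdLog (phiMap a * (phiMap a)ᵀ))| /
        frobNorm (spdLog (phiMap a * (phiMap a)ᵀ)) := by
  have hX : Mlog p x ∈ symplecticTangent (Fin m) := (bijOn_Mlog hp).mapsTo hx
  have hA : spdLog (phiMap a * (phiMap a)ᵀ) ∈ symplecticTangent (Fin m) :=
    bijOn_spdLog_posDefSymplectic.mapsTo (bijOn_phiMap_mul_transpose.mapsTo ha)
  rw [← sqrt_one_sub_sSup_frobInner_div_sq_mul_frobNorm hX hA]
  congr! 5
  ext c
  constructor
  · rintro ⟨q, hq, hqA, hqp, rfl⟩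
    exact ⟨Mlog p q, (bijOn_Mlog hp).mapsTo hq, hqA, (Mlog_eq_zero_iff hp hq).not.2 hqp, rfl⟩
  · rintro ⟨Y, hY, hYA, hY0, rfl⟩
    obtain ⟨q, hq, rfl⟩ := (bijOn_Mlog hp).surjOn hY
    exact ⟨q, hq, hYA, (Mlog_eq_zero_iff hp hq).not.1 hY0, rfl⟩
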